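/- Let C be a strong divisibility sequence, let p be an ideal prime for C with parameter s = s(p), and let k ≥ 2. For any n ≥ 0, write n = α(p)·n' + r with n' ≥ 0 and 0 ≤ r < α(p). Then T_{p,k,C}(n, x) = Σ_{λ=0}^{k−1} u_{p,k,C,λ}(r) · T_{p,k,λ}(n', x), where u_{p,k,C,λ}(r) = x^{(s−1)λ} · Σ_{j=0}^{λ} (−1)^j · C(k,j) · C(r + (λ−j)·α(p) + k − 1, k−1) (C(a,b) denoting the ordinary binomial coefficient). -/

import Mathlib

open Finset

/-- A strong divisibility sequence: nonzero integers `Cs 1, Cs 2, ...` with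
`gcd (Cs n) (Cs m) = |Cs (gcd n m)|`. -/
def IsStrongDivSeq (Cs : ℕ → ℤ) : Prop :=
  (∀ n, 1 ≤ n → Cs n ≠ 0) ∧
  ∀ m n, 1 ≤ m → 1 ≤ n → Int.gcd (Cs n) (Cs m) = (Cs (Nat.gcd n m)).natAbs

/-- `a` is the rank of apparition of `m` in the sequence `Cs`:
the least index `j ≥ 1` such that `m ∣ Cs j`. -/
def IsRank (Cs : ℕ → ℤ) (m a : ℕ) : Prop :=
  1 ≤ a ∧ (m : ℤ) ∣ Cs a ∧ ∀ j, 1 ≤ j → (m : ℤ) ∣ Cs j → a ≤ j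

/-- The `C`-orial: `0!_C = 1`, `n!_C = Cs 1 * Cs 2 * ⋯ * Cs n`. -/
def Corial (Cs : ℕ → ℤ) : ℕ → ℤ
  | 0 => 1
  | n + 1 => Corial Cs n * Cs (n + 1)

/-- `p` is an ideal prime for `Cs`, with `α k` the rank of apparition of `p ^ k`
and parameter `s = s(p)`. -/
def IdealPrime (Cs : ℕ → ℤ) (p : ℕ) (α : ℕ → ℕ) (s : ℕ) : Prop :=
  1 ≤ s ∧ (∀ k, 1 ≤ k → IsRank Cs (p ^ k) (α k)) ∧
  (∀ k, 1 ≤ k → k ≤ s → α k = α 1) ∧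
  (∀ k, s < k → α k = p ^ (k - s) * α 1)

/-- The `p`-adic valuation of the `C`-multinomial coefficient,
defined as `ν_p(n!_C) - ∑_i ν_p(m_i!_C)` (an integer). -/
def nuCmulti (p : ℕ) (Cs : ℕ → ℤ) {k : ℕ} (n : ℕ) (m : Fin k → ℕ) : ℤ :=
  (padicValInt p (Corial Cs n) : ℤ) - ∑ i, (padicValInt p (Corial Cs (m i)) : ℤ)

/-- `T_{p,k,C}(n, x)`: the generating polynomial counting `C`-multinomial coefficients
with `k` parts and top index `n` by their `p`-adic valuations. -/
noncomputable def TmultiC (p k : ℕ) (Cs : ℕ → ℤ) (n : ℕ) : Polynomial ℤ :=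
  ∑ m ∈ Finset.Nat.antidiagonalTuple k n, Polynomial.X ^ (nuCmulti p Cs n m).toNat

/-- `T_{p,k}(n, x)`: the generating polynomial counting ordinary multinomial coefficients
with `k` parts and top index `n` by their `p`-adic valuations. -/
noncomputable def TmultiOrd (p k n : ℕ) : Polynomial ℤ :=
  ∑ m ∈ Finset.Nat.antidiagonalTuple k n,
    Polynomial.X ^ (padicValNat p (Nat.multinomial Finset.univ m))

/-- `T_{p,k,λ}(n, x)`: `0` if `n < λ`, and
`x^(ν_p(n!/(n-λ)!) + λ) · T_{p,k}(n - λ, x)` otherwise. -/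
noncomputable def TmultiLam (p k lam n : ℕ) : Polynomial ℤ :=
  if n < lam then 0
  else Polynomial.X ^ ((padicValNat p (Nat.factorial n)
      - padicValNat p (Nat.factorial (n - lam))) + lam) * TmultiOrd p k (n - lam)

/-- The ideal-prime initial vector entry
`u_{p,k,C,λ}(r) = x^{(s-1)λ} · ∑_{j=0}^{λ} (-1)^j C(k,j) C(r + (λ-j)α + k - 1, k - 1)`. -/
noncomputable def uIdealMulti (αp s k lam r : ℕ) : Polynomial ℤ :=
  Polynomial.X ^ ((s - 1) * lam) *
    Polynomial.C (∑ j ∈ Finset.range (lam + 1),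
      (-1 : ℤ) ^ j * (Nat.choose k j : ℤ) *
        (Nat.choose (r + (lam - j) * αp + k - 1) (k - 1) : ℤ))

/-!
Write `a = α(p)`. Strong divisibility turns the ranks of apparition of the powers of `p` into the
formula `ν_p(n!_C) = s ⌊n/a⌋ + ν_p(⌊n/a⌋!)`, so the valuation of a `C`-multinomial coefficient
depends only on the quotients `⌊m_i/a⌋`. If these quotients add up to `n' - λ`, the remainders add
up to `aλ + r`, and the number of `k`-tuples of remainders with that sum, which is the coefficient
of `X^(aλ+r)` in `((1 - X^a)/(1 - X))^k`, is the alternating sum in `u_{p,k,C,λ}(r)`.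
-/

open Polynomial (X)
open scoped Polynomial PowerSeries

section StrongDivisibility

variable {Cs : ℕ → ℤ}

theorem IsRank.dvd_iff {d a n : ℕ} (ha : IsRank Cs d a) (hC : IsStrongDivSeq Cs) (hn : 1 ≤ n) :
    (d : ℤ) ∣ Cs n ↔ a ∣ n := by
  obtain ⟨ha_pos, hda, ha_le⟩ := ha
  have hgcd : (Int.gcd (Cs n) (Cs a) : ℤ) ∣ Cs (n.gcd a) ∧
      Cs (n.gcd a) ∣ (Int.gcd (Cs n) (Cs a) : ℤ) := by
    rw [hC.2 a n ha_pos hn]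
    exact ⟨Int.natAbs_dvd.mpr dvd_rfl, Int.dvd_natAbs.mpr dvd_rfl⟩
  constructor
  · intro hdn
    have ha_le_gcd : a ≤ n.gcd a :=
      ha_le _ (Nat.gcd_pos_of_pos_left _ hn) ((Int.dvd_coe_gcd hdn hda).trans hgcd.1)
    have hgcd_eq : n.gcd a = a := le_antisymm (Nat.gcd_le_right _ ha_pos) ha_le_gcd
    exact Nat.gcd_eq_right_iff_dvd.mp hgcd_eq
  · intro han
    rw [Nat.gcd_eq_right han] at hgcd
    exact (hda.trans hgcd.2).trans (Int.gcd_dvd_left ..)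

theorem IsStrongDivSeq.corial_ne_zero (hC : IsStrongDivSeq Cs) (n : ℕ) : Corial Cs n ≠ 0 := by
  induction n with
  | zero => exact one_ne_zero
  | succ n ih => exact mul_ne_zero ih (hC.1 _ n.succ_pos)

end StrongDivisibility

/-- The `p`-adic valuation of a `C`-multinomial coefficient at an ideal prime with parameter `s`,
as a function of the quotients `N = ⌊n / α(p)⌋` and `q i = ⌊m i / α(p)⌋` of its arguments. It is
an integer, like `nuCmulti`, so that the subtractions are not truncated. -/
def quotientValuation (p s N : ℕ) {k : ℕ} (q : Fin k → ℕ) : ℤ :=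
  s * (N - ∑ i, (q i : ℤ)) +
    (padicValNat p N.factorial - ∑ i, (padicValNat p (q i).factorial : ℤ))

namespace IdealPrime

variable {Cs : ℕ → ℤ} {p s : ℕ} {α : ℕ → ℕ}

theorem rank_pos (hid : IdealPrime Cs p α s) : 0 < α 1 :=
  (hid.2.1 1 le_rfl).1

theorem pow_dvd_iff (hid : IdealPrime Cs p α s) (hC : IsStrongDivSeq Cs) {j n : ℕ} (hj : 1 ≤ j)
    (hn : 1 ≤ n) : (p : ℤ) ^ j ∣ Cs n ↔ α j ∣ n := by
  simpa using (hid.2.1 j hj).dvd_iff hC hn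

theorem padicValInt_of_not_dvd (hid : IdealPrime Cs p α s) (hC : IsStrongDivSeq Cs) {n : ℕ}
    (hn : 1 ≤ n) (hndvd : ¬ α 1 ∣ n) : padicValInt p (Cs n) = 0 := by
  rw [← hid.pow_dvd_iff hC le_rfl hn, pow_one, Int.natCast_dvd] at hndvd
  exact padicValNat.eq_zero_of_not_dvd hndvd

variable [Fact p.Prime]

theorem padicValInt_rank_mul (hid : IdealPrime Cs p α s) (hC : IsStrongDivSeq Cs) {q : ℕ}
    (hq : 1 ≤ q) : padicValInt p (Cs (α 1 * q)) = s + padicValNat p q := by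
  have hpos : 1 ≤ α 1 * q := Nat.mul_pos hid.rank_pos hq
  refine eq_of_forall_le_iff fun j => ?_
  rcases Nat.eq_zero_or_pos j with rfl | hj
  · simp only [zero_le]
  have hle_iff : j ≤ padicValInt p (Cs (α 1 * q)) ↔ α j ∣ α 1 * q := by
    rw [← hid.pow_dvd_iff hC hj hpos, padicValInt_dvd_iff, or_iff_right (hC.1 _ hpos)]
  rw [hle_iff]
  rcases le_or_gt j s with hjs | hsj
  · rw [hid.2.2.1 j hj hjs]
    exact iff_of_true (dvd_mul_right _ _) (hjs.trans (Nat.le_add_right _ _))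
  · rw [hid.2.2.2 j hsj, mul_comm (p ^ _), Nat.mul_dvd_mul_iff_left hid.rank_pos,
      padicValNat_dvd_iff_le (Nat.one_le_iff_ne_zero.mp hq), Nat.sub_le_iff_le_add']

theorem padicValInt_corial (hid : IdealPrime Cs p α s) (hC : IsStrongDivSeq Cs) (n : ℕ) :
    padicValInt p (Corial Cs n) = s * (n / α 1) + padicValNat p (n / α 1).factorial := by
  induction n with
  | zero => simp [Corial]
  | succ n ih =>
    rw [Corial, padicValInt.mul (hC.corial_ne_zero n) (hC.1 (n + 1) n.succ_pos), ih]
    by_cases hdvd : α 1 ∣ n + 1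
    · have hn : n + 1 = α 1 * (n / α 1 + 1) := by
        rw [← Nat.succ_div_of_dvd hdvd, Nat.mul_div_cancel' hdvd]
      rw [Nat.succ_div_of_dvd hdvd, hn, hid.padicValInt_rank_mul hC (Nat.succ_pos _),
        Nat.factorial_succ, padicValNat.mul (Nat.succ_ne_zero _) (Nat.factorial_ne_zero _)]
      ring
    · rw [Nat.succ_div_of_not_dvd hdvd, hid.padicValInt_of_not_dvd hC n.succ_pos hdvd, add_zero]

theorem nuCmulti_eq_quotientValuation (hid : IdealPrime Cs p α s) (hC : IsStrongDivSeq Cs)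
    {k : ℕ} (n : ℕ) (m : Fin k → ℕ) :
    nuCmulti p Cs n m = quotientValuation p s (n / α 1) fun i => m i / α 1 := by
  simp only [nuCmulti, quotientValuation, hid.padicValInt_corial hC, Nat.cast_add, Nat.cast_mul,
    sum_add_distrib, mul_sub, mul_sum]
  ring

end IdealPrime

section OrdinaryMultinomial

variable {p : ℕ} [hp : Fact p.Prime]

theorem padicValNat_factorial_sum {ι : Type*} (t : Finset ι) (q : ι → ℕ) :
    padicValNat p (∑ i ∈ t, q i).factorial =
      ∑ i ∈ t, padicValNat p (q i).factorial + padicValNat p (Nat.multinomial t q) := by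
  have hfactorial : ∀ i ∈ t, (q i).factorial ≠ 0 := fun i _ => Nat.factorial_ne_zero _
  rw [← Nat.multinomial_spec, padicValNat.mul (prod_ne_zero_iff.mpr hfactorial)
    (Nat.multinomial_pos t q).ne']
  simp only [← Nat.factorization_def _ hp.out, Nat.factorization_prod_apply hfactorial]

theorem padicValNat_factorial_mono {m n : ℕ} (hmn : m ≤ n) :
    padicValNat p m.factorial ≤ padicValNat p n.factorial :=
  (padicValNat_dvd_iff_le n.factorial_ne_zero).mp
    (pow_padicValNat_dvd.trans (Nat.factorial_dvd_factorial hmn))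

theorem toNat_quotientValuation {s lam N k : ℕ} (hs : 1 ≤ s) (hlam : lam ≤ N) {q : Fin k → ℕ}
    (hq : ∑ i, q i = N - lam) :
    (quotientValuation p s N q).toNat = (s - 1) * lam +
      (padicValNat p N.factorial - padicValNat p (N - lam).factorial + lam) +
      padicValNat p (Nat.multinomial univ q) := by
  have hmultinomial := congrArg (Nat.cast : ℕ → ℤ) (padicValNat_factorial_sum (p := p) univ q)
  have hmono := padicValNat_factorial_mono (p := p) (Nat.sub_le N lam)
  rw [hq] at hmultinomial
  rw [quotientValuation, ← Nat.cast_sum, hq, ← Int.toNat_natCast (_ + _ + _)]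
  congr 1
  push_cast [hs, hlam, hmono] at hmultinomial ⊢
  linear_combination hmultinomial

theorem sum_X_pow_quotientValuation {s lam N : ℕ} (hs : 1 ≤ s) (hlam : lam ≤ N) (k : ℕ) :
    ∑ q ∈ Nat.antidiagonalTuple k (N - lam), (X : ℤ[X]) ^ (quotientValuation p s N q).toNat =
      X ^ ((s - 1) * lam) * TmultiLam p k lam N := by
  rw [TmultiLam, if_neg hlam.not_gt, TmultiOrd, ← mul_assoc, ← pow_add, mul_sum]
  refine sum_congr rfl fun q hq => ?_
  rw [toNat_quotientValuation hs hlam (Nat.mem_antidiagonalTuple.mp hq), pow_add]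

end OrdinaryMultinomial

/-- The `k`-tuples of naturals smaller than `a` with sum `N`; for us, the possible tuples of
remainders modulo `a`. -/
def boundedTuples (k a N : ℕ) : Finset (Fin k → ℕ) :=
  {ρ ∈ Fintype.piFinset fun _ => range a | ∑ i, ρ i = N}

section BoundedTuples

variable {k a N : ℕ}

theorem mem_boundedTuples {ρ : Fin k → ℕ} :
    ρ ∈ boundedTuples k a N ↔ (∀ i, ρ i < a) ∧ ∑ i, ρ i = N := by
  simp [boundedTuples]

theorem boundedTuples_eq_empty (hk : 0 < k) (hN : k * a ≤ N) : boundedTuples k a N = ∅ := by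
  refine eq_empty_of_forall_notMem fun ρ hρ => ?_
  obtain ⟨hlt, hsum⟩ := mem_boundedTuples.mp hρ
  have : ∑ i, ρ i < ∑ _i : Fin k, a :=
    sum_lt_sum_of_nonempty ⟨⟨0, hk⟩, mem_univ _⟩ fun i _ => hlt i
  rw [sum_const, card_univ, Fintype.card_fin, smul_eq_mul] at this
  omega

theorem coeff_geom_sum_pow (k a N : ℕ) :
    PowerSeries.coeff N ((∑ i ∈ range a, (PowerSeries.X : ℤ⟦X⟧) ^ i) ^ k) =
      #(boundedTuples k a N) := by
  rw [← Fin.prod_const, prod_univ_sum, map_sum, boundedTuples, card_filter, Nat.cast_sum]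
  refine sum_congr rfl fun ρ _ => ?_
  rw [prod_pow_eq_pow_sum, PowerSeries.coeff_X_pow]
  simp only [eq_comm, Nat.cast_ite, Nat.cast_one, Nat.cast_zero]

theorem geom_sum_pow_succ_eq (k a : ℕ) :
    (∑ i ∈ range a, (PowerSeries.X : ℤ⟦X⟧) ^ i) ^ (k + 1) =
      (1 - PowerSeries.X ^ a) ^ (k + 1) * PowerSeries.mk fun n => ((k + n).choose k : ℤ) := by
  rw [← PowerSeries.mk_one_pow_eq_mk_choose_add, ← mul_pow, ← mul_neg_geom_sum, mul_right_comm,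
    mul_comm (1 - _), PowerSeries.mk_one_mul_one_sub_eq_one, one_mul]

theorem card_boundedTuples (k N : ℕ) (ha : 0 < a) :
    (#(boundedTuples (k + 1) a N) : ℤ) = ∑ j ∈ range (N / a + 1),
      (-1) ^ j * ((k + 1).choose j : ℤ) * ((N - a * j + k).choose k : ℤ) := by
  have hbinomial : (1 - (PowerSeries.X : ℤ⟦X⟧) ^ a) ^ (k + 1) = ∑ j ∈ range (k + 2),
      PowerSeries.C ((-1) ^ j * ((k + 1).choose j : ℤ)) * PowerSeries.X ^ (a * j) := by
    rw [sub_eq_neg_add, add_pow]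
    refine sum_congr rfl fun j _ => ?_
    rw [neg_pow, ← pow_mul, one_pow, map_mul, map_pow, map_neg, map_one, map_natCast]
    ring
  rw [← coeff_geom_sum_pow, geom_sum_pow_succ_eq, hbinomial, sum_mul, map_sum]
  simp only [mul_assoc, PowerSeries.coeff_C_mul, PowerSeries.coeff_X_pow_mul',
    PowerSeries.coeff_mk, add_comm k (_ - _)]
  have hle_iff (j : ℕ) : j < N / a + 1 ↔ a * j ≤ N := by
    rw [Nat.lt_succ_iff, Nat.le_div_iff_mul_le ha, mul_comm]
  refine sum_congr_of_eq_on_inter (fun j _ hj => ?_) (fun j _ hj => ?_) (fun j _ hj => ?_)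
  · rw [mem_range, hle_iff] at hj
    rw [if_neg hj, mul_zero, mul_zero]
  · rw [mem_range, not_lt] at hj
    rw [Nat.choose_eq_zero_of_lt hj, Nat.cast_zero, zero_mul, mul_zero]
  · rw [mem_range, hle_iff] at hj
    rw [if_pos hj]

theorem uIdealMulti_eq_card {r : ℕ} (s k lam : ℕ) (hr : r < a) :
    uIdealMulti a s (k + 1) lam r =
      X ^ ((s - 1) * lam) * (#(boundedTuples (k + 1) a (a * lam + r)) : ℤ[X]) := by
  have ha : 0 < a := pos_of_gt hr
  rw [uIdealMulti, ← Int.cast_natCast, card_boundedTuples _ _ ha, Nat.mul_add_div ha,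
    Nat.div_eq_of_lt hr, add_zero, ← Polynomial.C_eq_intCast]
  congr 2
  refine sum_congr rfl fun j hj => ?_
  have hsub : r + (lam - j) * a + (k + 1) - 1 = a * lam + r - a * j + k := by
    obtain ⟨c, rfl⟩ := Nat.exists_eq_add_of_le (mem_range_succ_iff.mp hj)
    rw [Nat.add_sub_cancel_left, mul_add, mul_comm c]
    omega
  rw [hsub, Nat.add_sub_cancel]

end BoundedTuples

section QuotientRemainder

variable {M : Type*} [AddCommMonoid M] {k a : ℕ}

theorem sum_eq_mul_sum_div_add_sum_mod {ι : Type*} (t : Finset ι) (a : ℕ) (m : ι → ℕ) :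
    ∑ i ∈ t, m i = a * ∑ i ∈ t, m i / a + ∑ i ∈ t, m i % a := by
  simp only [mul_sum, ← sum_add_distrib, Nat.div_add_mod]

theorem sum_antidiagonalTuple_filter_div (ha : 0 < a) (c t : ℕ) (f : (Fin k → ℕ) → M) :
    ∑ m ∈ Nat.antidiagonalTuple k (a * c + t) with ∑ i, m i / a = c, f (fun i => m i / a) =
      #(boundedTuples k a t) • ∑ q ∈ Nat.antidiagonalTuple k c, f q := by
  rw [← sum_const, ← sum_product' (boundedTuples k a t) _ fun _ q => f q]
  refine sum_nbij' (fun m => (fun i => m i % a, fun i => m i / a))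
    (fun x i => a * x.2 i + x.1 i) ?_ ?_ ?_ ?_ fun _ _ => rfl
  · intro m hm
    rw [mem_filter, Nat.mem_antidiagonalTuple, sum_eq_mul_sum_div_add_sum_mod univ a] at hm
    obtain ⟨hsum, hquot⟩ := hm
    rw [hquot] at hsum
    exact mem_product.mpr ⟨mem_boundedTuples.mpr ⟨fun i => Nat.mod_lt _ ha,
      Nat.add_left_cancel hsum⟩, Nat.mem_antidiagonalTuple.mpr hquot⟩
  · rintro ⟨ρ, q⟩ hx
    rw [mem_product, mem_boundedTuples, Nat.mem_antidiagonalTuple] at hx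
    obtain ⟨⟨hlt, hρ⟩, hq⟩ := hx
    simp only [mem_filter, Nat.mem_antidiagonalTuple, sum_add_distrib, ← mul_sum, hρ, hq,
      Nat.mul_add_div ha, Nat.div_eq_of_lt (hlt _), add_zero, and_self]
  · exact fun m _ => funext fun i => Nat.div_add_mod _ _
  · rintro ⟨ρ, q⟩ hx
    obtain ⟨hlt, -⟩ := mem_boundedTuples.mp (mem_product.mp hx).1
    simp only [Nat.mul_add_mod, Nat.mod_eq_of_lt (hlt _), Nat.mul_add_div ha,
      Nat.div_eq_of_lt (hlt _), add_zero]

theorem sum_antidiagonalTuple_div (ha : 0 < a) (n : ℕ) (f : (Fin k → ℕ) → M) :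
    ∑ m ∈ Nat.antidiagonalTuple k n, f (fun i => m i / a) =
      ∑ c ∈ range (n / a + 1),
        #(boundedTuples k a (n - a * c)) • ∑ q ∈ Nat.antidiagonalTuple k c, f q := by
  have hmaps : ∀ m ∈ Nat.antidiagonalTuple k n, ∑ i, m i / a ∈ range (n / a + 1) := by
    intro m hm
    rw [Nat.mem_antidiagonalTuple, sum_eq_mul_sum_div_add_sum_mod univ a] at hm
    rw [mem_range_succ_iff, Nat.le_div_iff_mul_le ha, mul_comm]
    omega
  rw [← sum_fiberwise_of_maps_to hmaps]
  refine sum_congr rfl fun c hc => ?_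
  have hac : a * c ≤ n := (Nat.mul_le_mul_left a (mem_range_succ_iff.mp hc)).trans
    (Nat.mul_div_le n a)
  rw [← sum_antidiagonalTuple_filter_div ha, Nat.add_sub_cancel' hac]

theorem sum_antidiagonalTuple_mul_add_div {r : ℕ} (hr : r < a) (N : ℕ) (f : (Fin k → ℕ) → M) :
    ∑ m ∈ Nat.antidiagonalTuple k (a * N + r), f (fun i => m i / a) =
      ∑ lam ∈ range (N + 1), #(boundedTuples k a (a * lam + r)) •
        ∑ q ∈ Nat.antidiagonalTuple k (N - lam), f q := by
  have ha : 0 < a := pos_of_gt hr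
  rw [sum_antidiagonalTuple_div ha, Nat.mul_add_div ha, Nat.div_eq_of_lt hr, add_zero, ← sum_flip]
  refine sum_congr rfl fun lam hlam => ?_
  obtain ⟨c, rfl⟩ := Nat.exists_eq_add_of_le (mem_range_succ_iff.mp hlam)
  have hrem : a * (lam + c) + r - a * c = a * lam + r := by
    rw [mul_add]
    omega
  rw [Nat.add_sub_cancel_left, hrem]

end QuotientRemainder

theorem stmt2 (Cs : ℕ → ℤ) (p : ℕ) (hp : p.Prime) (α : ℕ → ℕ) (s : ℕ)
    (hC : IsStrongDivSeq Cs) (hid : IdealPrime Cs p α s)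
    (k : ℕ) (hk : 2 ≤ k) (n' r : ℕ) (hr : r < α 1) :
    TmultiC p k Cs (α 1 * n' + r) =
      ∑ lam ∈ Finset.range k, uIdealMulti (α 1) s k lam r * TmultiLam p k lam n' := by
  have : Fact p.Prime := ⟨hp⟩
  obtain ⟨d, rfl⟩ : ∃ d, k = d + 1 := ⟨k - 1, by omega⟩
  have hdiv : (α 1 * n' + r) / α 1 = n' := by
    rw [Nat.mul_add_div hid.rank_pos, Nat.div_eq_of_lt hr, add_zero]
  simp only [TmultiC, hid.nuCmulti_eq_quotientValuation hC, hdiv]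
  rw [sum_antidiagonalTuple_mul_add_div hr n' fun q => X ^ (quotientValuation p s n' q).toNat]
  refine sum_congr_of_eq_on_inter (fun lam _ hlam => ?_) (fun lam _ hlam => ?_)
    (fun lam hlam _ => ?_)
  · have hlarge : (d + 1) * α 1 ≤ α 1 * lam + r := by
      rw [mem_range, not_lt] at hlam
      nlinarith
    rw [boundedTuples_eq_empty d.succ_pos hlarge, card_empty, zero_smul]
  · rw [mem_range_succ_iff, not_le] at hlam
    rw [TmultiLam, if_pos hlam, mul_zero]
  · rw [sum_X_pow_quotientValuation hid.1 (mem_range_succ_iff.mp hlam),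
      uIdealMulti_eq_card s d lam hr, nsmul_eq_mul]
    ring
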